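/- Let (R, m) be a Noetherian local ring of positive depth. Then R satisfies (SAC) if and only if R satisfies (SACC). -/

import Mathlib

open CategoryTheory

/-- The `i`-th Ext group of `R`-modules `M` and `N`. -/
noncomputable abbrev ExtGroup (R : Type) [CommRing R] (M N : ModuleCat.{0} R) (i : ℕ) : Type :=
  (((Ext R (ModuleCat.{0} R) i).obj (Opposite.op M)).obj N)

/-- The symmetric Auslander condition (SAC): for every finitely generated `R`-module `M`,
if `Ext^i(M,R) = 0` for all `i > 0` and `Ext^i(M,M) = 0` for `i ≫ 0`,
then `Ext^i(M,M) = 0` for all `i > 0`. -/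
def SAC (R : Type) [CommRing R] : Prop :=
  ∀ M : ModuleCat.{0} R, Module.Finite R M →
    (∀ i : ℕ, 0 < i → Subsingleton (ExtGroup R M (ModuleCat.of R R) i)) →
    (∃ N : ℕ, ∀ i : ℕ, N < i → Subsingleton (ExtGroup R M M i)) →
    ∀ i : ℕ, 0 < i → Subsingleton (ExtGroup R M M i)

/-- `M` has constant rank `r`: the localization of `M` at every associated prime of `R`
is free of rank `r`. -/
def HasConstRank (R : Type) [CommRing R] (M : ModuleCat.{0} R) (r : ℕ) : Prop :=
  ∀ (p : Ideal R) [p.IsPrime], p ∈ associatedPrimes R R →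
    Nonempty ((LocalizedModule p.primeCompl M) ≃ₗ[Localization.AtPrime p]
      (Fin r → Localization.AtPrime p))

/-- The symmetric Auslander condition for modules with constant rank (SACC). -/
def SACC (R : Type) [CommRing R] : Prop :=
  ∀ M : ModuleCat.{0} R, Module.Finite R M → (∃ r : ℕ, HasConstRank R M r) →
    (∀ i : ℕ, 0 < i → Subsingleton (ExtGroup R M (ModuleCat.of R R) i)) →
    (∃ N : ℕ, ∀ i : ℕ, N < i → Subsingleton (ExtGroup R M M i)) →
    ∀ i : ℕ, 0 < i → Subsingleton (ExtGroup R M M i)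

/-!
Suppose `R` satisfies (SACC) and let `M` be as in (SAC). Let `K` be the kernel of a free cover of
`M`. Since `Ext^{>0}(M,R) = 0`, the groups `Ext^i(K,K)` and `Ext^i(M,M)` vanish for the same
`i > 0`, and every regular `x ∈ R` is regular on `K ⊆ R^k`. The kernel `L` of a free cover `F` of
`K/xK` contains `xF`, so it has constant rank, and (SACC) for `L` yields
`Ext^{≥2}(K/xK,K/xK) = 0`. As `x` kills `Ext(K,K/xK)`, it follows that `Ext^{>0}(K,K/xK) = 0`.
Hence `x` acts surjectively on `Ext^{>0}(K,K)`, and Nakayama's lemma applies once every maximal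
ideal contains such an `x`.
-/

open Abelian

section ExtVanishing

universe w v u

variable {C : Type u} [Category.{v} C] [Abelian C]

lemma subsingleton_leftDerived_ext_succ_iff {R : Type*} [Ring R] [Linear R C] [EnoughProjectives C]
    [HasExt.{w} C] (X Y : C) (n : ℕ) :
    Subsingleton (((_root_.Ext R C (n + 1)).obj (Opposite.op X)).obj Y) ↔
      Subsingleton (Abelian.Ext.{w} X Y (n + 1)) := by
  let P := ProjectiveResolution.of X
  have subsingleton_iff_cocycles_eq_coboundaries :
      Subsingleton (((_root_.Ext R C (n + 1)).obj (Opposite.op X)).obj Y) ↔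
        ∀ f : P.complex.X (n + 1) ⟶ Y, P.complex.d (n + 2) (n + 1) ≫ f = 0 →
          ∃ g : P.complex.X n ⟶ Y, P.complex.d (n + 1) n ≫ g = f := by
    rw [← ModuleCat.isZero_iff_subsingleton, (P.isoExt (R := R) (n + 1) Y).isZero_iff,
      ← HomologicalComplex.exactAt_iff_isZero_homology,
      HomologicalComplex.exactAt_iff' _ n (n + 1) (n + 2) (by simp) (by simp),
      ShortComplex.moduleCat_exact_iff]
    rfl
  rw [subsingleton_iff_cocycles_eq_coboundaries]
  constructor
  · intro h
    refine subsingleton_of_forall_eq 0 fun e ↦ ?_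
    obtain ⟨f, hf, rfl⟩ := P.extMk_surjective e (n + 2) rfl
    exact (P.extMk_eq_zero_iff f (n + 2) rfl hf n rfl).2 (h f hf)
  · intro _ f hf
    exact (P.extMk_eq_zero_iff f (n + 2) rfl hf n rfl).1 (Subsingleton.elim _ _)

variable [HasExt.{w} C] {S : ShortComplex C}

lemma subsingleton_ext_X₁_left (hS : S.ShortExact) {Y : C} {n : ℕ}
    (h₂ : Subsingleton (Abelian.Ext S.X₂ Y n)) (h₃ : Subsingleton (Abelian.Ext S.X₃ Y (n + 1))) :
    Subsingleton (Abelian.Ext S.X₁ Y n) := by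
  refine subsingleton_of_forall_eq 0 fun e ↦ ?_
  obtain ⟨e₂, rfl⟩ :=
    Ext.contravariant_sequence_exact₁ hS Y e (add_comm 1 n) (Subsingleton.elim _ _)
  rw [Subsingleton.elim e₂ 0, Ext.comp_zero]

lemma subsingleton_ext_X₃_left (hS : S.ShortExact) {Y : C} {n : ℕ}
    (h₁ : Subsingleton (Abelian.Ext S.X₁ Y n)) (h₂ : Subsingleton (Abelian.Ext S.X₂ Y (n + 1))) :
    Subsingleton (Abelian.Ext S.X₃ Y (n + 1)) := by
  refine subsingleton_of_forall_eq 0 fun e ↦ ?_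
  obtain ⟨e₁, rfl⟩ :=
    Ext.contravariant_sequence_exact₃ hS Y e (Subsingleton.elim _ _) (add_comm 1 n)
  rw [Subsingleton.elim e₁ 0, Ext.comp_zero]

lemma subsingleton_ext_X₁_right (hS : S.ShortExact) {X : C} {n : ℕ}
    (h₃ : Subsingleton (Abelian.Ext X S.X₃ n)) (h₂ : Subsingleton (Abelian.Ext X S.X₂ (n + 1))) :
    Subsingleton (Abelian.Ext X S.X₁ (n + 1)) := by
  refine subsingleton_of_forall_eq 0 fun e ↦ ?_
  obtain ⟨e₃, rfl⟩ := Ext.covariant_sequence_exact₁ X hS e (Subsingleton.elim _ _) rfl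
  rw [Subsingleton.elim e₃ 0, Ext.zero_comp]

lemma subsingleton_ext_X₃_right (hS : S.ShortExact) {X : C} {n : ℕ}
    (h₂ : Subsingleton (Abelian.Ext X S.X₂ n)) (h₁ : Subsingleton (Abelian.Ext X S.X₁ (n + 1))) :
    Subsingleton (Abelian.Ext X S.X₃ n) := by
  refine subsingleton_of_forall_eq 0 fun e ↦ ?_
  obtain ⟨e₂, rfl⟩ := Ext.covariant_sequence_exact₃ X hS e rfl (Subsingleton.elim _ _)
  rw [Subsingleton.elim e₂ 0, Ext.zero_comp]

lemma subsingleton_ext_X₁_left_iff_of_projective (hS : S.ShortExact) [Projective S.X₂] (Y : C)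
    (n : ℕ) :
    Subsingleton (Abelian.Ext S.X₁ Y (n + 1)) ↔ Subsingleton (Abelian.Ext S.X₃ Y (n + 2)) :=
  ⟨fun h ↦ subsingleton_ext_X₃_left hS h (Ext.subsingleton_of_projective _ _ _),
    fun h ↦ subsingleton_ext_X₁_left hS (Ext.subsingleton_of_projective _ _ _) h⟩

lemma subsingleton_ext_X₁_self_iff_X₃_self (hS : S.ShortExact) [Projective S.X₂] {n : ℕ}
    (h : Subsingleton (Abelian.Ext S.X₃ S.X₂ (n + 1)))
    (h' : Subsingleton (Abelian.Ext S.X₃ S.X₂ (n + 2))) :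
    Subsingleton (Abelian.Ext S.X₁ S.X₁ (n + 1)) ↔ Subsingleton (Abelian.Ext S.X₃ S.X₃ (n + 1)) :=
  (subsingleton_ext_X₁_left_iff_of_projective hS S.X₁ n).trans
    ⟨fun h₁ ↦ subsingleton_ext_X₃_right hS h h₁, fun h₃ ↦ subsingleton_ext_X₁_right hS h₃ h'⟩

end ExtVanishing

section ModuleExt

universe v u

open scoped Pointwise

variable {R : Type u} [CommRing R] [Small.{v} R]

lemma subsingleton_ext_pi {ι : Type} [Finite ι] {M : ModuleCat.{v} R} {N : ι → ModuleCat.{v} R}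
    {n : ℕ} (h : ∀ i, Subsingleton (Abelian.Ext M (N i) n)) :
    Subsingleton (Abelian.Ext M (ModuleCat.of R (∀ i, N i)) n) := by
  have := Fintype.ofFinite ι
  let isoPi := (extFunctorObj M n).mapIso (ModuleCat.biproductIsoPi N)
  exact (isoPi.addCommGroupIsoToAddEquiv.symm.trans
    (Ext.addEquivBiproduct M (Limits.biproduct.isBilimit N) n)).subsingleton

lemma smul_ext_eq_zero_of_isTorsionBy {X Y : ModuleCat.{v} R} {x : R}
    (hY : Module.IsTorsionBy R Y x) {n : ℕ} (e : Abelian.Ext X Y n) : x • e = 0 := by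
  have smul_id_eq_zero : x • 𝟙 Y = 0 := ModuleCat.hom_ext (LinearMap.ext fun y ↦ @hY y)
  rw [Ext.smul_eq_comp_mk₀, smul_id_eq_zero, Ext.mk₀_zero, Ext.comp_zero]

lemma subsingleton_ext_of_quotSMulTop_left {M Y : ModuleCat.{v} R} {x : R}
    (hM : IsSMulRegular M x) (hY : Module.IsTorsionBy R Y x) {n : ℕ}
    (h : Subsingleton (Abelian.Ext (ModuleCat.of R (QuotSMulTop x M)) Y (n + 1))) :
    Subsingleton (Abelian.Ext M Y n) := by
  have smul_eq_mk₀_comp (e : Abelian.Ext M Y n) :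
      x • e = (Ext.mk₀ (x • 𝟙 M)).comp e (zero_add n) := by
    rw [Ext.mk₀_smul, Ext.smul_comp, Ext.mk₀_id_comp]
  refine subsingleton_of_forall_eq 0 fun e ↦ ?_
  obtain ⟨e', rfl⟩ := Ext.contravariant_sequence_exact₁ hM.smulShortComplex_shortExact Y e
    (add_comm 1 n) (h.elim _ _)
  exact (smul_eq_mk₀_comp e').symm.trans (smul_ext_eq_zero_of_isTorsionBy hY e')

lemma smul_ext_surjective_of_quotSMulTop_right {X M : ModuleCat.{v} R} {x : R}
    (hM : IsSMulRegular M x) {n : ℕ}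
    (h : Subsingleton (Abelian.Ext X (ModuleCat.of R (QuotSMulTop x M)) n)) :
    Function.Surjective (x • · : Abelian.Ext X M n → Abelian.Ext X M n) := fun e ↦ by
  obtain ⟨e', he'⟩ :=
    Ext.covariant_sequence_exact₂ X hM.smulShortComplex_shortExact e (h.elim _ _)
  exact ⟨e', (Ext.smul_eq_comp_mk₀ e' x).trans he'⟩

end ModuleExt

section CommutativeAlgebra

variable {R M : Type*} [CommRing R] [AddCommGroup M] [Module R M]

lemma subsingleton_of_forall_isMaximal_smul_surjective [Module.Finite R M]
    (h : ∀ m : Ideal R, m.IsMaximal → ∃ x ∈ m, Function.Surjective (x • · : M → M)) :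
    Subsingleton M := by
  rw [← Module.annihilator_eq_top_iff (R := R)]
  by_contra hann
  obtain ⟨m, hm, hann_le⟩ := Ideal.exists_le_maximal _ hann
  obtain ⟨x, hxm, hx⟩ := h m hm
  have top_le_smul_top : (⊤ : Submodule R M) ≤ m • ⊤ := fun y _ ↦ by
    obtain ⟨z, rfl⟩ := hx y
    exact Submodule.smul_mem_smul hxm trivial
  obtain ⟨r, hr, hr_smul⟩ := Submodule.exists_sub_one_mem_and_smul_eq_zero_of_fg_of_le_smul m ⊤
    Module.Finite.fg_top top_le_smul_top
  have hrm : r ∈ m := hann_le (Module.mem_annihilator.2 fun y ↦ hr_smul y trivial)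
  exact hm.ne_top ((Ideal.eq_top_iff_one m).2 ((Submodule.sub_mem_iff_right m hrm).1 hr))

lemma notMem_of_isSMulRegular_of_mem_associatedPrimes {x : R} (hx : IsSMulRegular M x)
    {p : Ideal R} (hp : p ∈ associatedPrimes R M) : x ∉ p := by
  obtain ⟨hp_prime, a, rfl⟩ := hp
  rintro ⟨n, hn⟩
  rw [Submodule.mem_colon_singleton, Submodule.mem_bot] at hn
  obtain rfl : a = 0 := (hx.pow n).right_eq_zero_of_smul hn
  exact hp_prime.ne_top (by simp)

lemma isLocalizedModule_comp_subtype {M' : Type*} [AddCommGroup M'] [Module R M']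
    (S : Submonoid R) (f : M →ₗ[R] M') [IsLocalizedModule S f] (N : Submodule R M) {s : R}
    (hs : s ∈ S) (hN : ∀ m, s • m ∈ N) : IsLocalizedModule S (f ∘ₗ N.subtype) where
  map_units := IsLocalizedModule.map_units f
  surj y := by
    obtain ⟨⟨m, t⟩, hm⟩ := IsLocalizedModule.surj S f y
    refine ⟨⟨⟨s • m, hN m⟩, ⟨s, hs⟩ * t⟩, ?_⟩
    rw [mul_smul, hm]
    exact (map_smul f s m).symm
  exists_of_eq h := by
    obtain ⟨c, hc⟩ := IsLocalizedModule.exists_of_eq (S := S) (f := f) h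
    exact ⟨c, Subtype.ext hc⟩

end CommutativeAlgebra

section SymmetricAuslander

variable {R : Type} [CommRing R]

lemma hasConstRank_of_smul_mem {k : ℕ} (N : Submodule R (Fin k → R)) {x : R}
    (hx : IsSMulRegular R x) (hN : ∀ v, x • v ∈ N) : HasConstRank R (ModuleCat.of R N) k := by
  intro p _ hp
  let toLocalization : (Fin k → R) →ₗ[R] (Fin k → Localization.AtPrime p) :=
    LinearMap.pi fun i ↦ Algebra.linearMap R _ ∘ₗ LinearMap.proj i
  have : IsLocalizedModule p.primeCompl (toLocalization ∘ₗ N.subtype) :=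
    isLocalizedModule_comp_subtype _ _ N (notMem_of_isSMulRegular_of_mem_associatedPrimes hx hp) hN
  exact ⟨(IsLocalizedModule.iso p.primeCompl
    (toLocalization ∘ₗ N.subtype)).extendScalarsOfIsLocalization p.primeCompl _⟩

lemma forall_subsingleton_extGroup_iff (M N : ModuleCat.{0} R) (n : ℕ) :
    (∀ i, n < i → Subsingleton (ExtGroup R M N i)) ↔
      ∀ i ≥ n, Subsingleton (Abelian.Ext M N (i + 1)) := by
  simp only [← subsingleton_leftDerived_ext_succ_iff (R := R)]
  refine ⟨fun h i hi ↦ h (i + 1) (Nat.lt_succ_of_le hi), fun h i hi ↦ ?_⟩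
  obtain ⟨j, rfl⟩ := Nat.exists_eq_add_one_of_ne_zero (Nat.ne_zero_of_lt hi)
  exact h j (Nat.le_of_lt_succ hi)

lemma SACC.subsingleton_ext_self (hR : SACC R) {M : ModuleCat.{0} R} [Module.Finite R M] {r : ℕ}
    (hr : HasConstRank R M r) (hMR : ∀ i, Subsingleton (Abelian.Ext M (ModuleCat.of R R) (i + 1)))
    {n : ℕ} (hMM : ∀ i ≥ n, Subsingleton (Abelian.Ext M M (i + 1))) (i : ℕ) :
    Subsingleton (Abelian.Ext M M (i + 1)) :=
  (forall_subsingleton_extGroup_iff M M 0).1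
    (hR M ‹_› ⟨r, hr⟩ ((forall_subsingleton_extGroup_iff M _ 0).2 fun i _ ↦ hMR i)
      ⟨n, (forall_subsingleton_extGroup_iff M M n).2 hMM⟩) i i.zero_le

variable [IsNoetherianRing R]

lemma SACC.subsingleton_ext_self_of_isTorsionBy (hR : SACC R) {x : R} (hx : IsSMulRegular R x)
    {Q : ModuleCat.{0} R} [Module.Finite R Q] (hQ : Module.IsTorsionBy R Q x)
    (hQR : ∀ i, Subsingleton (Abelian.Ext Q (ModuleCat.of R R) (i + 2)))
    {n : ℕ} (hQQ : ∀ i ≥ n, Subsingleton (Abelian.Ext Q Q (i + 2))) (i : ℕ) :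
    Subsingleton (Abelian.Ext Q Q (i + 2)) := by
  obtain ⟨k, f, hf⟩ := Module.Finite.exists_fin' R Q
  have hS := LinearMap.shortExact_shortComplexKer hf
  have hrank : HasConstRank R (ModuleCat.of R (LinearMap.ker f)) k :=
    hasConstRank_of_smul_mem _ hx fun v ↦ by rw [LinearMap.mem_ker, map_smul, hQ]
  have syzygy_iff (j : ℕ) := subsingleton_ext_X₁_self_iff_X₃_self hS (n := j + 1)
    (subsingleton_ext_pi fun _ ↦ hQR j) (subsingleton_ext_pi fun _ ↦ hQR (j + 1))
  refine (syzygy_iff i).1 (hR.subsingleton_ext_self hrank (n := n + 1)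
    (fun j ↦ (subsingleton_ext_X₁_left_iff_of_projective hS _ j).2 (hQR j)) (fun j hj ↦ ?_) (i + 1))
  obtain ⟨j, rfl⟩ := Nat.exists_eq_add_of_le' hj
  exact (syzygy_iff (j + n)).2 (hQQ _ (Nat.le_add_left n j))

lemma SACC.smul_ext_self_surjective (hR : SACC R) {x : R} (hx : IsSMulRegular R x)
    {M : ModuleCat.{0} R} [Module.Finite R M] (hM : IsSMulRegular M x)
    (hMR : ∀ i, Subsingleton (Abelian.Ext M (ModuleCat.of R R) (i + 1)))
    {n : ℕ} (hMM : ∀ i ≥ n, Subsingleton (Abelian.Ext M M (i + 1))) (i : ℕ) :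
    Function.Surjective (x • · : Abelian.Ext M M (i + 1) → Abelian.Ext M M (i + 1)) := by
  have hS := hM.smulShortComplex_shortExact
  let Q := ModuleCat.of R (QuotSMulTop x M)
  have hQ : Module.IsTorsionBy R Q x := Module.isTorsionBy_quotient_element_smul M x
  have hQR (j : ℕ) : Subsingleton (Abelian.Ext Q (ModuleCat.of R R) (j + 2)) :=
    subsingleton_ext_X₃_left hS (hMR j) (hMR (j + 1))
  have hMQ (j : ℕ) (hj : n ≤ j) : Subsingleton (Abelian.Ext M Q (j + 1)) :=
    subsingleton_ext_X₃_right hS (hMM j hj) (hMM (j + 1) (Nat.le_succ_of_le hj))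
  have hQQ (j : ℕ) (hj : n ≤ j) : Subsingleton (Abelian.Ext Q Q (j + 2)) :=
    subsingleton_ext_X₃_left hS (hMQ j hj) (hMQ (j + 1) (Nat.le_succ_of_le hj))
  have hQQ_all := hR.subsingleton_ext_self_of_isTorsionBy hx hQ hQR hQQ
  exact smul_ext_surjective_of_quotSMulTop_right hM
    (subsingleton_ext_of_quotSMulTop_left hM hQ (hQQ_all i))

lemma SACC.subsingleton_ext_self_of_forall_isMaximal (hR : SACC R) {M : ModuleCat.{0} R}
    [Module.Finite R M]
    (hM : ∀ m : Ideal R, m.IsMaximal → ∃ x ∈ m, IsSMulRegular R x ∧ IsSMulRegular M x)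
    (hMR : ∀ i, Subsingleton (Abelian.Ext M (ModuleCat.of R R) (i + 1)))
    {n : ℕ} (hMM : ∀ i ≥ n, Subsingleton (Abelian.Ext M M (i + 1))) (i : ℕ) :
    Subsingleton (Abelian.Ext M M (i + 1)) :=
  subsingleton_of_forall_isMaximal_smul_surjective (R := R) fun m hm ↦
    let ⟨x, hxm, hxR, hxM⟩ := hM m hm
    ⟨x, hxm, hR.smul_ext_self_surjective hxR hxM hMR hMM i⟩

theorem stmt_5_general
    (hdepth : ∀ m : Ideal R, m.IsMaximal → ∃ x ∈ m, IsSMulRegular R x) : SAC R ↔ SACC R := by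
  refine ⟨fun h M hM _ ↦ h M hM, fun hR M hM hMR ⟨n, hMM⟩ ↦ ?_⟩
  rw [forall_subsingleton_extGroup_iff] at hMR hMM ⊢
  obtain ⟨k, f, hf⟩ := Module.Finite.exists_fin' R M
  have hS := LinearMap.shortExact_shortComplexKer hf
  have syzygy_iff (i : ℕ) := subsingleton_ext_X₁_self_iff_X₃_self hS (n := i)
    (subsingleton_ext_pi fun _ ↦ hMR i i.zero_le)
    (subsingleton_ext_pi fun _ ↦ hMR (i + 1) (i + 1).zero_le)
  have hker (m : Ideal R) (hm : m.IsMaximal) :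
      ∃ x ∈ m, IsSMulRegular R x ∧ IsSMulRegular (LinearMap.ker f) x :=
    let ⟨x, hxm, hx⟩ := hdepth m hm
    ⟨x, hxm, hx, .submodule _ x (Pi.isSMulRegular_iff.2 fun _ ↦ hx)⟩
  exact fun i _ ↦ (syzygy_iff i).1 (hR.subsingleton_ext_self_of_forall_isMaximal hker
    (fun j ↦ (subsingleton_ext_X₁_left_iff_of_projective hS _ j).2 (hMR (j + 1) (j + 1).zero_le))
    (fun j hj ↦ (syzygy_iff j).2 (hMM j hj)) i)

end SymmetricAuslander

/-- A Noetherian local ring of positive depth satisfies (SAC) iff it satisfies (SACC). -/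
theorem stmt_5 (R : Type) [CommRing R] [IsNoetherianRing R] [IsLocalRing R]
    (hdepth : ∃ y ∈ IsLocalRing.maximalIdeal R, IsSMulRegular R y) :
    SAC R ↔ SACC R :=
  stmt_5_general fun _ hm ↦ IsLocalRing.eq_maximalIdeal hm ▸ hdepth
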